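/- For every influence I, every k ∈ ℕ, every local state x ∈ X, every d ∈ D, and every action a ∈ A: Q^I_k((x,d),a) ≤ Q̂_k(x,a). That is, the influence-optimistic Q-MMDP values pointwise dominate the Q-MMDP values of the influence-augmented sub-problem for any influence. -/

import Mathlib

open Finset

section QMMDP

variable {Xl Xn A U D : Type*}
  [Fintype Xl] [Nonempty Xl] [Fintype Xn] [Nonempty Xn]
  [Fintype A] [Nonempty A] [Fintype U] [Nonempty U] [Fintype D] [Nonempty D]

/-- Influence-optimistic Q-MMDP values `Q̂_k(x,a)`. -/
noncomputable def Qhat (Pl : Xl → (Xl × Xn) → A → ℝ) (Pn : Xn → (Xl × Xn) → A → U → ℝ)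
    (R : (Xl × Xn) → A → (Xl × Xn) → ℝ) :
    ℕ → (Xl × Xn) → A → ℝ
  | 0 => fun _ _ => 0
  | k + 1 => fun x a =>
      Finset.univ.sup' Finset.univ_nonempty (fun u : U =>
        ∑ x' : Xl × Xn, Pl x'.1 x a * Pn x'.2 x a u *
          (R x a x' +
            Finset.univ.sup' Finset.univ_nonempty (fun a' : A => Qhat Pl Pn R k x' a')))

/-- Influence-induced Q-MMDP values `Q^I_k((x,d),a)` of the influence-augmented
sub-problem, for an influence `I`. -/
noncomputable def QI (Pl : Xl → (Xl × Xn) → A → ℝ) (Pn : Xn → (Xl × Xn) → A → U → ℝ)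
    (δ : (Xl × Xn) → D → A → (Xl × Xn) → D) (R : (Xl × Xn) → A → (Xl × Xn) → ℝ)
    (I : D → U → ℝ) :
    ℕ → (Xl × Xn) → D → A → ℝ
  | 0 => fun _ _ _ => 0
  | k + 1 => fun x d a =>
      ∑ x' : Xl × Xn, Pl x'.1 x a * (∑ u : U, Pn x'.2 x a u * I d u) *
        (R x a x' +
          Finset.univ.sup' Finset.univ_nonempty (fun a' : A =>
            QI Pl Pn δ R I k x' (δ x d a x') a'))

end QMMDP

section QMMDP

variable {Xl Xn A U D : Type*}
  [Fintype Xl] [Nonempty Xl] [Fintype Xn] [Nonempty Xn]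
  [Fintype A] [Nonempty A] [Fintype U] [Nonempty U] [Fintype D] [Nonempty D]

/-- the influence-optimistic Q-MMDP values pointwise dominate the Q-MMDP
values of the influence-augmented sub-problem for any influence. -/
theorem QI_le_Qhat
    (Pl : Xl → (Xl × Xn) → A → ℝ) (Pn : Xn → (Xl × Xn) → A → U → ℝ)
    (δ : (Xl × Xn) → D → A → (Xl × Xn) → D) (R : (Xl × Xn) → A → (Xl × Xn) → ℝ)
    (hPl0 : ∀ x'l x a, 0 ≤ Pl x'l x a) (hPl1 : ∀ x a, ∑ x'l : Xl, Pl x'l x a = 1)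
    (hPn0 : ∀ x'n x a u, 0 ≤ Pn x'n x a u) (hPn1 : ∀ x a u, ∑ x'n : Xn, Pn x'n x a u = 1)
    (I : D → U → ℝ) (hI0 : ∀ d u, 0 ≤ I d u) (hI1 : ∀ d, ∑ u : U, I d u = 1)
    (k : ℕ) (x : Xl × Xn) (d : D) (a : A) :
    QI Pl Pn δ R I k x d a ≤ Qhat Pl Pn R k x a := by
  induction k generalizing x d a with
  | zero => simp [QI, Qhat]
  | succ k ih =>
    have hV : ∀ x' : Xl × Xn, ∀ d' : D,
        Finset.univ.sup' Finset.univ_nonempty (fun a' : A => QI Pl Pn δ R I k x' d' a') ≤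
        Finset.univ.sup' Finset.univ_nonempty (fun a' : A => Qhat Pl Pn R k x' a') := by
      intro x' d'
      apply Finset.sup'_le
      intro a' _
      exact (ih x' d' a').trans
        (Finset.le_sup' (fun a' : A => Qhat Pl Pn R k x' a') (Finset.mem_univ a'))
    set V : Xl × Xn → ℝ := fun x' =>
      Finset.univ.sup' Finset.univ_nonempty (fun a' : A => Qhat Pl Pn R k x' a') with hVdef
    let F : U → ℝ := fun u => ∑ x' : Xl × Xn, Pl x'.1 x a * Pn x'.2 x a u * (R x a x' + V x')
    have hQ : Qhat Pl Pn R (k + 1) x a = Finset.univ.sup' Finset.univ_nonempty F := by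
      simp only [Qhat, F, V]
    rw [hQ]
    calc QI Pl Pn δ R I (k + 1) x d a
        ≤ ∑ x' : Xl × Xn, Pl x'.1 x a * (∑ u : U, Pn x'.2 x a u * I d u) *
            (R x a x' + V x') := by
          simp only [QI]
          apply Finset.sum_le_sum
          intro x' _
          apply mul_le_mul_of_nonneg_left
          · have := hV x' (δ x d a x')
            exact add_le_add le_rfl this
          · exact mul_nonneg (hPl0 _ _ _)
              (Finset.sum_nonneg fun u _ => mul_nonneg (hPn0 _ _ _ _) (hI0 _ _))
      _ = ∑ u : U, I d u * F u := by
          simp only [F, Finset.mul_sum, Finset.sum_mul]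
          rw [Finset.sum_comm]
          refine Finset.sum_congr rfl fun u _ => Finset.sum_congr rfl fun x' _ => ?_
          ring
      _ ≤ ∑ u : U, I d u * Finset.univ.sup' Finset.univ_nonempty F :=
          Finset.sum_le_sum fun u _ =>
            mul_le_mul_of_nonneg_left (Finset.le_sup' F (Finset.mem_univ u)) (hI0 d u)
      _ = Finset.univ.sup' Finset.univ_nonempty F := by
          rw [← Finset.sum_mul, hI1, one_mul]

end QMMDP
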